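/- For every fixed positive integer d and every fixed integer m ≥ 0, the limit as x → ∞ of ( ∑_{p ≤ x, p prime, p ≡ 1 (mod d)} p^m ) / ( ∑_{p ≤ x, p prime} p^m ) exists and equals 1/φ(d). -/

import Mathlib

open Filter

/-!
Let `θ_P(n)` be the sum of `log p` over the `p ≤ n` in a set `P` of primes. The `L`-series of the
von Mangoldt function restricted to a residue class `a` prime to `d` continues continuously to
`1 ≤ re s`, apart from a simple pole at `1` with residue `1/φ(d)`, because Dirichlet `L`-functions
do not vanish there. By the Wiener–Ikehara theorem, and since proper prime powers contribute only
`o(n)`, this gives `θ_P(n) ~ n/φ(d)` for the primes `P` in the class `a`.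

Partial summation against an increasing weight `w` with `n * w n = O(∑_{k ≤ n} w k)` shows that
`∑_{p ∈ P} w p * log p` is `∑_{k ≤ n} w k / φ(d)` up to a smaller error. Comparing `P` with the set
of all primes, a second partial summation against the decreasing factor `1 / log` removes the
logarithms from both sums.

For the Wiener–Ikehara theorem, let `r` be a bounded function on `(0, ∞)` whose Laplace transform
extends continuously to the imaginary axis. Fubini and the Riemann–Lebesgue lemma show that the
translates of `r` tend weakly to zero when tested against Fourier transforms of compactly supported
functions. These are dense in `L¹`, so the means of `r` over the intervals `[y, y + δ]` tend to zero
as well, and the monotonicity of the summatory function turns this into pointwise convergence.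
-/

section

open Topology MeasureTheory FourierTransform Set
open scoped Convolution SchwartzMap

/-! ### Approximation in `L¹` by Fourier transforms -/

section FourierDense

variable {α : Type*} [MeasurableSpace α] {μ : Measure α}
  {V : Type*} [NormedAddCommGroup V] [InnerProductSpace ℝ V] [FiniteDimensional ℝ V]
  [MeasurableSpace V] [BorelSpace V]

theorem exists_memLp_two_sq_eq {K : α → ℂ} (hK : Integrable K μ) :
    ∃ k : α → ℂ, MemLp k 2 μ ∧ k ^ 2 = K := by
  have hsq (x : α) : (K x ^ ((2 : ℕ) : ℂ)⁻¹) ^ 2 = K x := Complex.cpow_nat_inv_pow (K x) two_ne_zero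
  refine ⟨fun x => K x ^ ((2 : ℕ) : ℂ)⁻¹, (memLp_two_iff_integrable_sq_norm ?_).2 ?_, funext hsq⟩
  · exact (hK.aemeasurable.pow_const _).aestronglyMeasurable
  · refine hK.norm.congr (ae_of_all _ fun x => ?_)
    simp only [← norm_pow, hsq]

theorem integral_norm_sq_sub_sq_le {k g : α → ℂ} (hk : MemLp k 2 μ) (hg : MemLp g 2 μ) :
    ∫ x, ‖k x ^ 2 - g x ^ 2‖ ∂μ ≤ ‖hk.toLp k - hg.toLp g‖ * ‖hk.toLp k + hg.toLp g‖ := by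
  refine le_of_eq_of_le ?_ (Lp.norm_smul_le (r := 1) (hk.toLp k - hg.toLp g)
    (hk.toLp k + hg.toLp g))
  rw [L1.norm_eq_integral_norm]
  refine integral_congr_ae ?_
  filter_upwards [Lp.coeFn_lpSMul (r := 1) (hk.toLp k - hg.toLp g) (hk.toLp k + hg.toLp g),
    Lp.coeFn_sub (hk.toLp k) (hg.toLp g), Lp.coeFn_add (hk.toLp k) (hg.toLp g),
    hk.coeFn_toLp, hg.coeFn_toLp] with x hsmul hsub hadd hkx hgx
  rw [hsmul, Pi.smul_apply', hsub, hadd, Pi.sub_apply, Pi.add_apply, hkx, hgx, smul_eq_mul]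
  ring_nf

theorem exists_schwartzMap_hasCompactSupport_norm_sub_fourier_lt (k : Lp (α := V) ℂ 2) {ε : ℝ}
    (hε : 0 < ε) :
    ∃ φ : 𝓢(V, ℂ), HasCompactSupport φ ∧ ‖k - (𝓕 φ).toLp 2‖ < ε := by
  obtain ⟨F, ⟨g, hFg, hgc, hg⟩, hF⟩ :=
    (Lp.dense_hasCompactSupport_contDiff (E := V) (F := ℂ) (p := 2) (μ := volume)
      ENNReal.ofNat_ne_top).exists_dist_lt (𝓕⁻ k) hε
  refine ⟨hgc.toSchwartzMap hg, hgc, ?_⟩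
  have hFφ : F = (hgc.toSchwartzMap hg).toLp 2 :=
    Lp.ext (hFg.trans ((hgc.toSchwartzMap hg).coeFn_toLp 2).symm)
  have hk : 𝓕 (𝓕⁻ k) = k := FourierTransform.fourier_fourierInv_eq k
  rwa [dist_eq_norm, ← Lp.norm_fourier_eq, sub_eq_add_neg, FourierTransform.fourier_add,
    FourierTransform.fourier_neg, hk, hFφ, SchwartzMap.toLp_fourier_eq, ← sub_eq_add_neg] at hF

/-- Writing `K = k ^ 2`, Plancherel approximates `k` in `L²` by some `𝓕 φ`, and
`(𝓕 φ) ^ 2 = 𝓕 (φ ⋆ φ)` then approximates `K` in `L¹`. -/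
theorem exists_schwartzMap_hasCompactSupport_integral_norm_sub_fourier_le {K : V → ℂ}
    (hK : Integrable K) {ε : ℝ} (hε : 0 < ε) :
    ∃ f : 𝓢(V, ℂ), HasCompactSupport f ∧ ∫ x, ‖K x - 𝓕 (f : V → ℂ) x‖ ≤ ε := by
  obtain ⟨k, hk, rfl⟩ := exists_memLp_two_sq_eq hK
  set c : ℝ := 2 * ‖hk.toLp k‖ + 1
  have hc : 0 < c := by positivity
  obtain ⟨φ, hφ, hkφ⟩ := exists_schwartzMap_hasCompactSupport_norm_sub_fourier_lt (hk.toLp k)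
    (lt_min one_pos (div_pos hε hc))
  have hconv : ⇑(SchwartzMap.convolution (.mul ℂ ℂ) φ φ) = φ ⋆[.mul ℂ ℂ] φ :=
    funext (SchwartzMap.convolution_apply _ _ _)
  refine ⟨SchwartzMap.convolution (.mul ℂ ℂ) φ φ, hconv ▸ hφ.convolution _ hφ, ?_⟩
  have hg : MemLp (𝓕 φ : 𝓢(V, ℂ)) 2 := (𝓕 φ : 𝓢(V, ℂ)).memLp 2 volume
  have hsub : ‖hk.toLp k - hg.toLp _‖ < min 1 (ε / c) := hkφ
  have hadd : ‖hk.toLp k + hg.toLp _‖ ≤ c := calc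
    ‖hk.toLp k + hg.toLp _‖ = ‖(2 : ℝ) • hk.toLp k - (hk.toLp k - hg.toLp _)‖ := by
      rw [two_smul]; abel_nf
    _ ≤ ‖(2 : ℝ) • hk.toLp k‖ + ‖hk.toLp k - hg.toLp _‖ := norm_sub_le _ _
    _ ≤ c := by
      rw [norm_smul, Real.norm_two]
      exact add_le_add_right (hsub.le.trans (min_le_left _ _)) _
  calc ∫ x, ‖(k ^ 2) x - 𝓕 (SchwartzMap.convolution (.mul ℂ ℂ) φ φ : V → ℂ) x‖
      = ∫ x, ‖k x ^ 2 - (𝓕 φ : 𝓢(V, ℂ)) x ^ 2‖ := by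
        simp only [← SchwartzMap.fourier_coe, SchwartzMap.fourier_convolution, Pi.pow_apply,
          SchwartzMap.pairing_apply_apply, ContinuousLinearMap.mul_apply', sq]
    _ ≤ ‖hk.toLp k - hg.toLp _‖ * ‖hk.toLp k + hg.toLp _‖ := integral_norm_sq_sub_sq_le hk hg
    _ ≤ ε / c * c := by gcongr; exact hsub.le.trans (min_le_right _ _)
    _ = ε := div_mul_cancel₀ ε hc.ne'

end FourierDense

/-! ### The Wiener–Ikehara theorem -/

section Laplace

variable {r f : ℝ → ℂ} {M : ℝ} {H : ℂ → ℂ}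

theorem tendsto_integral_Ioi_mul_exp_neg {q : ℝ → ℂ} (hq : IntegrableOn q (Ioi 0)) :
    Tendsto (fun ε : ℝ => ∫ u in Ioi (0 : ℝ), q u * Complex.exp (-(ε * u))) (𝓝[>] 0)
      (𝓝 (∫ u in Ioi (0 : ℝ), q u)) := by
  refine tendsto_integral_filter_of_dominated_convergence (fun u => ‖q u‖)
    (Eventually.of_forall fun ε => ?_) ?_ hq.norm (ae_of_all _ fun u => ?_)
  · exact hq.aestronglyMeasurable.mul (by fun_prop)
  · filter_upwards [self_mem_nhdsWithin] with ε hε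
    filter_upwards [ae_restrict_mem measurableSet_Ioi] with u hu
    rw [norm_mul, Complex.norm_exp]
    refine mul_le_of_le_one_right (norm_nonneg _) (Real.exp_le_one_iff.2 ?_)
    simpa using (mul_pos (mem_Ioi.1 hε) (mem_Ioi.1 hu)).le
  · have hcont : Continuous fun ε : ℝ => q u * Complex.exp (-(ε * u)) := by fun_prop
    simpa using (hcont.tendsto 0).mono_left nhdsWithin_le_nhds

theorem tendsto_integral_add_mul_I (hH : ContinuousOn H {w | 0 ≤ w.re}) (hf : Continuous f)
    (hfc : HasCompactSupport f) :
    Tendsto (fun ε : ℝ => ∫ t : ℝ, H (ε + 2 * Real.pi * t * Complex.I) * f t) (𝓝[>] 0)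
      (𝓝 (∫ t : ℝ, H (2 * Real.pi * t * Complex.I) * f t)) := by
  have hcont : ContinuousOn (fun ε : ℝ => ∫ t : ℝ, H (ε + 2 * Real.pi * t * Complex.I) * f t)
      (Ici 0) := by
    refine continuousOn_integral_of_compact_support hfc
      ((hH.comp (by fun_prop) ?_).mul (by fun_prop)) fun ε t _ ht => ?_
    · rintro ⟨ε, t⟩ ⟨hε, -⟩
      simpa using hε
    · rw [image_eq_zero_of_notMem_tsupport ht, mul_zero]
  simpa using (hcont 0 self_mem_Ici).mono_left (nhdsWithin_mono 0 Ioi_subset_Ici_self)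

theorem fourier_fourierChar_smul (f : ℝ → ℂ) (y u : ℝ) :
    𝓕 (fun t => Real.fourierChar (t * y) • f t) u = 𝓕 f (u - y) := by
  simp only [Real.fourier_real_eq, smul_smul, ← AddChar.map_add_eq_mul, mul_sub, neg_sub,
    neg_add_eq_sub]

theorem norm_integral_mul_comp_sub_le (hM : ∀ u ∈ Ioi (0 : ℝ), ‖r u‖ ≤ M) {g : ℝ → ℂ}
    (hg : Integrable g) (y : ℝ) :
    ‖∫ u in Ioi (0 : ℝ), r u * g (u - y)‖ ≤ M * ∫ u, ‖g u‖ := by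
  have hM0 : 0 ≤ M := (norm_nonneg _).trans (hM 1 (mem_Ioi.2 one_pos))
  have hgy : Integrable fun u => M * ‖g (u - y)‖ := (hg.comp_sub_right y).norm.const_mul M
  calc ‖∫ u in Ioi (0 : ℝ), r u * g (u - y)‖
      ≤ ∫ u in Ioi (0 : ℝ), M * ‖g (u - y)‖ := by
        refine norm_integral_le_of_norm_le hgy.integrableOn ?_
        filter_upwards [ae_restrict_mem measurableSet_Ioi] with u hu
        rw [norm_mul]
        gcongr
        exact hM u hu
    _ ≤ ∫ u, M * ‖g (u - y)‖ :=
        setIntegral_le_integral hgy (ae_of_all _ fun u => by positivity)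
    _ = M * ∫ u, ‖g u‖ := by
        rw [integral_const_mul, integral_sub_right_eq_self (fun u => ‖g u‖) y]

theorem integral_mul_exp_mul_fourier_eq
    (hr : AEStronglyMeasurable r (volume.restrict (Ioi 0)))
    (hM : ∀ u ∈ Ioi (0 : ℝ), ‖r u‖ ≤ M)
    (hrH : ∀ w : ℂ, 0 < w.re → ∫ u in Ioi (0 : ℝ), r u * Complex.exp (-(w * u)) = H w)
    (hf : Integrable f) {ε : ℝ} (hε : 0 < ε) :
    ∫ u in Ioi (0 : ℝ), (r u * 𝓕 f u) * Complex.exp (-(ε * u)) =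
      ∫ t : ℝ, H (ε + 2 * Real.pi * t * Complex.I) * f t := by
  have hexp : Integrable (fun u : ℝ => r u * Complex.exp (-(ε * u))) (volume.restrict (Ioi 0)) := by
    refine Integrable.bdd_mul (c := M) ?_ hr
      ((ae_restrict_iff' measurableSet_Ioi).2 (ae_of_all _ hM))
    simpa [IntegrableOn] using integrableOn_exp_mul_complex_Ioi (a := -ε) (by simpa using hε) 0
  have hflip := VectorFourier.integral_fourierIntegral_smul_eq_flip (L := innerₗ ℝ)
    (ν := volume) Real.continuous_fourierChar continuous_inner hexp hf
  rw [flip_innerₗ] at hflip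
  simp only [mul_right_comm _ (𝓕 f _)]
  refine hflip.symm.trans (integral_congr_ae (ae_of_all _ fun t => ?_))
  dsimp only
  rw [← hrH _ (by simpa using hε), smul_eq_mul]
  congr 1
  refine integral_congr_ae (ae_of_all _ fun u => ?_)
  simp only [innerₗ_apply_apply, RCLike.inner_apply, conj_trivial, Circle.smul_def,
    Real.fourierChar_apply, smul_eq_mul]
  rw [mul_left_comm, ← Complex.exp_add]
  push_cast
  ring_nf

theorem integral_mul_fourier_eq
    (hr : AEStronglyMeasurable r (volume.restrict (Ioi 0)))
    (hM : ∀ u ∈ Ioi (0 : ℝ), ‖r u‖ ≤ M)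
    (hrH : ∀ w : ℂ, 0 < w.re → ∫ u in Ioi (0 : ℝ), r u * Complex.exp (-(w * u)) = H w)
    (hH : ContinuousOn H {w | 0 ≤ w.re}) (hf : Continuous f) (hfc : HasCompactSupport f)
    (hfi : Integrable (𝓕 f)) :
    ∫ u in Ioi (0 : ℝ), r u * 𝓕 f u = ∫ t : ℝ, H (2 * Real.pi * t * Complex.I) * f t := by
  refine tendsto_nhds_unique (tendsto_integral_Ioi_mul_exp_neg ?_)
    ((tendsto_integral_add_mul_I hH hf hfc).congr' ?_)
  · exact hfi.integrableOn.bdd_mul hr ((ae_restrict_iff' measurableSet_Ioi).2 (ae_of_all _ hM))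
  · filter_upwards [self_mem_nhdsWithin] with ε hε
    exact (integral_mul_exp_mul_fourier_eq hr hM hrH (hf.integrable_of_hasCompactSupport hfc)
      hε).symm

/-- Translating `𝓕 f` modulates `f`, so this is the Riemann–Lebesgue lemma. -/
theorem tendsto_integral_mul_fourier_sub
    (hr : AEStronglyMeasurable r (volume.restrict (Ioi 0)))
    (hM : ∀ u ∈ Ioi (0 : ℝ), ‖r u‖ ≤ M)
    (hrH : ∀ w : ℂ, 0 < w.re → ∫ u in Ioi (0 : ℝ), r u * Complex.exp (-(w * u)) = H w)
    (hH : ContinuousOn H {w | 0 ≤ w.re}) (hf : Continuous f) (hfc : HasCompactSupport f)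
    (hfi : Integrable (𝓕 f)) :
    Tendsto (fun y => ∫ u in Ioi (0 : ℝ), r u * 𝓕 f (u - y)) atTop (𝓝 0) := by
  have hmod (y : ℝ) : ∫ u in Ioi (0 : ℝ), r u * 𝓕 f (u - y) =
      𝓕 (fun t : ℝ => H (2 * Real.pi * t * Complex.I) * f t) (-y) := by
    simp only [← fourier_fourierChar_smul f y]
    have hcont : Continuous fun t => Real.fourierChar (t * y) • f t :=
      (Real.continuous_fourierChar.comp (by fun_prop)).smul hf
    rw [integral_mul_fourier_eq hr hM hrH hH hcont hfc.smul_left, Real.fourier_real_eq]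
    · simp only [mul_neg, neg_neg, mul_smul_comm]
    · simpa only [funext (fourier_fourierChar_smul f y)] using hfi.comp_sub_right y
  simp only [hmod]
  refine (Real.zero_at_infty_fourier _).comp (tendsto_neg_atTop_atBot.mono_right ?_)
  rw [cocompact_eq_atBot_atTop]
  exact le_sup_left

theorem tendsto_integral_mul_comp_sub
    (hr : AEStronglyMeasurable r (volume.restrict (Ioi 0)))
    (hM : ∀ u ∈ Ioi (0 : ℝ), ‖r u‖ ≤ M)
    (hrH : ∀ w : ℂ, 0 < w.re → ∫ u in Ioi (0 : ℝ), r u * Complex.exp (-(w * u)) = H w)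
    (hH : ContinuousOn H {w | 0 ≤ w.re}) {K : ℝ → ℂ} (hK : Integrable K) :
    Tendsto (fun y => ∫ u in Ioi (0 : ℝ), r u * K (u - y)) atTop (𝓝 0) := by
  have hM0 : 0 ≤ M := (norm_nonneg _).trans (hM 1 (mem_Ioi.2 one_pos))
  rw [NormedAddGroup.tendsto_nhds_zero]
  intro ε hε
  obtain ⟨f, hfc, hKf⟩ := exists_schwartzMap_hasCompactSupport_integral_norm_sub_fourier_le hK
    (ε := ε / (2 * (M + 1))) (by positivity)
  have hfi : Integrable (𝓕 (f : ℝ → ℂ)) := (𝓕 f : 𝓢(ℝ, ℂ)).integrable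
  have hint {g : ℝ → ℂ} (hg : Integrable g) (y : ℝ) :
      Integrable (fun u => r u * g (u - y)) (volume.restrict (Ioi 0)) :=
    (hg.comp_sub_right y).restrict.bdd_mul hr (ae_restrict_of_forall_mem measurableSet_Ioi hM)
  filter_upwards [NormedAddGroup.tendsto_nhds_zero.1
    (tendsto_integral_mul_fourier_sub hr hM hrH hH f.continuous hfc hfi) _ (half_pos hε)] with y hy
  calc ‖∫ u in Ioi (0 : ℝ), r u * K (u - y)‖
      = ‖(∫ u in Ioi (0 : ℝ), r u * (K - 𝓕 (f : ℝ → ℂ)) (u - y)) +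
          ∫ u in Ioi (0 : ℝ), r u * 𝓕 (f : ℝ → ℂ) (u - y)‖ := by
        rw [← integral_add (hint (hK.sub hfi) y) (hint hfi y)]
        simp only [Pi.sub_apply, mul_sub, sub_add_cancel]
    _ ≤ M * (∫ u, ‖K u - 𝓕 (f : ℝ → ℂ) u‖) + ‖∫ u in Ioi (0 : ℝ), r u * 𝓕 (f : ℝ → ℂ) (u - y)‖ :=
        (norm_add_le _ _).trans
          (add_le_add_left (norm_integral_mul_comp_sub_le hM (hK.sub hfi) y) _)
    _ < (M + 1) * (ε / (2 * (M + 1))) + ε / 2 := by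
        refine add_lt_add_of_le_of_lt ?_ hy
        gcongr
        linarith
    _ = ε := by field_simp; ring

theorem tendsto_intervalIntegral_add
    (hr : AEStronglyMeasurable r (volume.restrict (Ioi 0)))
    (hM : ∀ u ∈ Ioi (0 : ℝ), ‖r u‖ ≤ M)
    (hrH : ∀ w : ℂ, 0 < w.re → ∫ u in Ioi (0 : ℝ), r u * Complex.exp (-(w * u)) = H w)
    (hH : ContinuousOn H {w | 0 ≤ w.re}) {δ : ℝ} (hδ : 0 ≤ δ) :
    Tendsto (fun y => ∫ u in y..y + δ, r u) atTop (𝓝 0) := by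
  have hK : Integrable ((Ioc (0 : ℝ) δ).indicator (1 : ℝ → ℂ)) :=
    (integrable_indicator_iff measurableSet_Ioc).2 (integrableOn_const (by simp))
  refine (tendsto_integral_mul_comp_sub hr hM hrH hH hK).congr' ?_
  filter_upwards [eventually_ge_atTop 0] with y hy
  have hind (u : ℝ) : r u * (Ioc 0 δ).indicator 1 (u - y) = (Ioc y (y + δ)).indicator r u := by
    simp only [indicator_apply, mem_Ioc, sub_pos, sub_le_iff_le_add', Pi.one_apply, mul_ite,
      mul_one, mul_zero]
  simp only [hind]
  rw [setIntegral_indicator measurableSet_Ioc, intervalIntegral.integral_of_le (by linarith),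
    inter_eq_right.2 (Ioc_subset_Ioi_self.trans (Ioi_subset_Ioi hy))]

end Laplace

section Tauberian

variable {S : ℝ → ℝ} {A δ : ℝ}

theorem mul_exp_neg_le_of_monotone_mul_exp (hS : 0 ≤ S) (hmono : Monotone fun u => S u * Real.exp u)
    {u v : ℝ} (huv : u ≤ v) (hvu : v ≤ u + δ) : S u * Real.exp (-δ) ≤ S v := calc
  S u * Real.exp (-δ) ≤ S u * Real.exp (u - v) :=
    mul_le_mul_of_nonneg_left (Real.exp_le_exp.2 (by linarith)) (hS u)
  _ = S u * Real.exp u * Real.exp (-v) := by rw [sub_eq_add_neg, Real.exp_add, mul_assoc]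
  _ ≤ S v * Real.exp v * Real.exp (-v) :=
    mul_le_mul_of_nonneg_right (hmono huv) (Real.exp_pos _).le
  _ = S v := by rw [mul_assoc, ← Real.exp_add, add_neg_cancel, Real.exp_zero, mul_one]

theorem intervalIntegral_sub_mem_Icc_of_monotone_mul_exp (hS : 0 ≤ S)
    (hmono : Monotone fun u => S u * Real.exp u) (hδ : 0 ≤ δ) (y : ℝ) :
    ∫ u in y..y + δ, (S u - A) ∈
      Icc (δ * (S y * Real.exp (-δ) - A)) (δ * (S (y + δ) * Real.exp δ - A)) := by
  have hy : y ≤ y + δ := by linarith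
  have hint : IntervalIntegrable (fun u => S u - A) volume y (y + δ) := by
    have hSi := (hmono.intervalIntegrable (μ := volume) (a := y) (b := y + δ)).mul_continuousOn
      (g := fun u => Real.exp (-u)) (by fun_prop)
    simp only [mul_assoc, ← Real.exp_add, add_neg_cancel, Real.exp_zero, mul_one] at hSi
    exact hSi.sub intervalIntegrable_const
  constructor
  · calc
      δ * (S y * Real.exp (-δ) - A) = ∫ _ in y..y + δ, (S y * Real.exp (-δ) - A) := by
        rw [intervalIntegral.integral_const, add_sub_cancel_left, smul_eq_mul]
      _ ≤ ∫ u in y..y + δ, (S u - A) :=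
        intervalIntegral.integral_mono_on hy intervalIntegrable_const hint fun u hu =>
          sub_le_sub_right (mul_exp_neg_le_of_monotone_mul_exp hS hmono hu.1 hu.2) A
  · calc
      ∫ u in y..y + δ, (S u - A) ≤ ∫ _ in y..y + δ, (S (y + δ) * Real.exp δ - A) :=
          intervalIntegral.integral_mono_on hy hint intervalIntegrable_const fun u hu => by
            have h := mul_exp_neg_le_of_monotone_mul_exp hS hmono hu.2 (δ := δ) (by linarith [hu.1])
            rw [Real.exp_neg, ← div_eq_mul_inv, div_le_iff₀ (Real.exp_pos δ)] at h
            exact sub_le_sub_right h A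
      _ = δ * (S (y + δ) * Real.exp δ - A) := by
        rw [intervalIntegral.integral_const, add_sub_cancel_left, smul_eq_mul]

theorem tendsto_of_tendsto_intervalIntegral_sub (hS : 0 ≤ S)
    (hmono : Monotone fun u => S u * Real.exp u)
    (hlim : ∀ δ > 0, Tendsto (fun y => ∫ u in y..y + δ, (S u - A)) atTop (𝓝 0)) :
    Tendsto S atTop (𝓝 A) := by
  have hmean {δ : ℝ} (hδ : 0 < δ) (c : ℝ) :
      Tendsto (fun y => Real.exp c * ((∫ u in y..y + δ, (S u - A)) / δ + A)) atTop
        (𝓝 (Real.exp c * A)) := by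
    simpa using (((hlim δ hδ).div_const δ).add_const A).const_mul (Real.exp c)
  have hexp (σ : ℝ) : Tendsto (fun δ => Real.exp (σ * δ) * A) (𝓝[>] 0) (𝓝 A) := by
    have hcont : Continuous fun δ => Real.exp (σ * δ) * A := by fun_prop
    simpa using (hcont.tendsto 0).mono_left nhdsWithin_le_nhds
  refine tendsto_order.2 ⟨fun b hb => ?_, fun b hb => ?_⟩
  · obtain ⟨δ, hδb, hδ⟩ := (((hexp (-1)).eventually_const_lt hb).and self_mem_nhdsWithin).exists
    have hshift := tendsto_atTop_add_const_right atTop (-δ) tendsto_id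
    filter_upwards [hshift.eventually ((hmean hδ _).eventually_const_lt hδb)] with y hy
    refine hy.trans_le ?_
    have h := (intervalIntegral_sub_mem_Icc_of_monotone_mul_exp (A := A) hS hmono hδ.le (y + -δ)).2
    rw [neg_add_cancel_right, ← div_le_iff₀' hδ, le_sub_iff_add_le] at h
    rwa [neg_one_mul, Real.exp_neg, id, inv_mul_le_iff₀ (Real.exp_pos δ), mul_comm (Real.exp δ),
      neg_add_cancel_right]
  · obtain ⟨δ, hδb, hδ⟩ := (((hexp 1).eventually_lt_const hb).and self_mem_nhdsWithin).exists
    filter_upwards [(hmean hδ _).eventually_lt_const hδb] with y hy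
    refine lt_of_le_of_lt ?_ hy
    have h := (intervalIntegral_sub_mem_Icc_of_monotone_mul_exp (A := A) hS hmono hδ.le y).1
    rw [← le_div_iff₀' hδ, sub_le_iff_le_add, Real.exp_neg, ← div_eq_mul_inv,
      div_le_iff₀' (Real.exp_pos δ)] at h
    rwa [one_mul]

end Tauberian

theorem integral_Ioi_one_mul_cpow_neg (g : ℝ → ℂ) (s : ℂ) :
    ∫ t in Ioi (1 : ℝ), g t * (t : ℂ) ^ (-(s + 1)) =
      ∫ u in Ioi (0 : ℝ), g (Real.exp u) * Complex.exp (-(s * u)) := by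
  rw [← Real.exp_zero, ← integral_comp_exp_Ioi]
  refine setIntegral_congr_fun measurableSet_Ioi fun u _ => ?_
  have hne : ((Real.exp u : ℝ) : ℂ) ≠ 0 := Complex.ofReal_ne_zero.2 (Real.exp_pos u).ne'
  simp only [Complex.real_smul]
  rw [mul_left_comm, Complex.cpow_def_of_ne_zero hne, ← Complex.ofReal_log (Real.exp_pos u).le,
    Real.log_exp, Complex.ofReal_exp, ← Complex.exp_add]
  ring_nf

section WienerIkehara

variable {f : ℕ → ℝ} {A C : ℝ} {G : ℂ → ℂ}

theorem sum_Icc_floor_le (hf : 0 ≤ f)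
    (hC : ∀ n : ℕ, ∑ k ∈ Finset.Icc 1 n, f k ≤ C * n) {t : ℝ} (ht : 0 ≤ t) :
    ∑ k ∈ Finset.Icc 1 ⌊t⌋₊, f k ≤ C * t := by
  have hC0 : 0 ≤ C := by simpa using (hf 1).trans (by simpa using hC 1)
  exact (hC _).trans (mul_le_mul_of_nonneg_left (Nat.floor_le ht) hC0)

theorem monotone_sum_Icc_floor (hf : 0 ≤ f) :
    Monotone fun t : ℝ => ∑ k ∈ Finset.Icc 1 ⌊t⌋₊, f k := fun _ _ hst =>
  Finset.sum_le_sum_of_subset_of_nonneg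
    (Finset.Icc_subset_Icc le_rfl (Nat.floor_le_floor hst)) fun k _ _ => hf k

/-- The mean of `f` over `1, …, ⌊exp u⌋`, normalised by `exp u`. In this scale a Dirichlet series
is a Laplace transform. -/
noncomputable def expMean (f : ℕ → ℝ) (u : ℝ) : ℝ :=
  (∑ k ∈ Finset.Icc 1 ⌊Real.exp u⌋₊, f k) * Real.exp (-u)

theorem expMean_nonneg (hf : 0 ≤ f) : 0 ≤ expMean f := fun _ =>
  mul_nonneg (Finset.sum_nonneg fun k _ => hf k) (Real.exp_pos _).le

theorem expMean_mul_exp (f : ℕ → ℝ) (u : ℝ) :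
    expMean f u * Real.exp u = ∑ k ∈ Finset.Icc 1 ⌊Real.exp u⌋₊, f k := by
  rw [expMean, mul_assoc, ← Real.exp_add, neg_add_cancel, Real.exp_zero, mul_one]

theorem expMean_log_natCast {n : ℕ} (hn : 0 < n) :
    expMean f (Real.log n) = (∑ k ∈ Finset.Icc 1 n, f k) / n := by
  rw [expMean, Real.exp_neg, Real.exp_log (Nat.cast_pos.2 hn), Nat.floor_natCast, div_eq_mul_inv]

theorem abs_expMean_le (hf : 0 ≤ f) (hC : ∀ n : ℕ, ∑ k ∈ Finset.Icc 1 n, f k ≤ C * n) (u : ℝ) :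
    |expMean f u| ≤ C := by
  rw [abs_of_nonneg (expMean_nonneg hf u), ← mul_le_mul_iff_left₀ (Real.exp_pos u),
    expMean_mul_exp]
  exact sum_Icc_floor_le hf hC (Real.exp_pos u).le

theorem monotone_expMean_mul_exp (hf : 0 ≤ f) : Monotone fun u => expMean f u * Real.exp u := by
  simp only [expMean_mul_exp]
  exact (monotone_sum_Icc_floor hf).comp Real.exp_monotone

theorem measurable_expMean (hf : 0 ≤ f) : Measurable (expMean f) :=
  ((monotone_sum_Icc_floor hf).measurable.comp Real.measurable_exp).mul (by fun_prop)

theorem integral_expMean_mul_exp_neg (hf : 0 ≤ f)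
    (hC : ∀ n : ℕ, ∑ k ∈ Finset.Icc 1 n, f k ≤ C * n) {w : ℂ} (hw : 0 < w.re) :
    ∫ u in Ioi (0 : ℝ), (expMean f u : ℂ) * Complex.exp (-(w * u)) =
      LSeries (fun n => f n) (1 + w) / (1 + w) := by
  have hw1 : 1 < (1 + w).re := by simpa using hw
  have hO : (fun n => ∑ k ∈ Finset.Icc 1 n, f k) =O[atTop] fun n => (n : ℝ) ^ (1 : ℝ) := by
    refine Asymptotics.IsBigO.of_bound C (Eventually.of_forall fun n => ?_)
    rw [Real.norm_of_nonneg (Finset.sum_nonneg fun k _ => hf k), Real.rpow_one,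
      Real.norm_of_nonneg n.cast_nonneg]
    exact hC n
  rw [LSeries_eq_mul_integral_of_nonneg f zero_le_one hw1 hO hf,
    integral_Ioi_one_mul_cpow_neg (fun t => ∑ k ∈ Finset.Icc 1 ⌊t⌋₊, (f k : ℂ)),
    mul_div_cancel_left₀ _ (Complex.ne_zero_of_one_lt_re hw1)]
  refine integral_congr_ae (ae_of_all _ fun u => ?_)
  simp only [expMean]
  push_cast
  rw [mul_assoc, ← Complex.exp_add]
  ring_nf

theorem integral_sub_mul_exp_neg_eq {S : ℝ → ℝ}
    (hS : AEStronglyMeasurable S (volume.restrict (Ioi 0)))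
    (hC : ∀ u ∈ Ioi (0 : ℝ), |S u| ≤ C) {w : ℂ} (hw : 0 < w.re) :
    ∫ u in Ioi (0 : ℝ), ((S u - A : ℝ) : ℂ) * Complex.exp (-(w * u)) =
      (∫ u in Ioi (0 : ℝ), (S u : ℂ) * Complex.exp (-(w * u))) - A / w := by
  have hre : (-w).re < 0 := by simpa using hw
  have hexp : IntegrableOn (fun u : ℝ => Complex.exp (-(w * u))) (Ioi 0) := by
    simpa only [neg_mul] using integrableOn_exp_mul_complex_Ioi hre 0
  have hintegral : ∫ u in Ioi (0 : ℝ), Complex.exp (-(w * u)) = 1 / w := by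
    simpa [neg_div_neg_eq] using integral_exp_mul_complex_Ioi hre 0
  have hSexp : IntegrableOn (fun u : ℝ => (S u : ℂ) * Complex.exp (-(w * u))) (Ioi 0) := by
    refine hexp.bdd_mul (c := C) (Complex.continuous_ofReal.comp_aestronglyMeasurable hS) ?_
    refine ae_restrict_of_forall_mem measurableSet_Ioi fun u hu => ?_
    rw [Complex.norm_real]
    exact hC u hu
  simp only [Complex.ofReal_sub, sub_mul]
  rw [integral_sub hSexp (hexp.const_mul _), integral_const_mul, hintegral, mul_one_div]

theorem integral_expMean_sub_mul_exp_neg (hf : 0 ≤ f)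
    (hC : ∀ n : ℕ, ∑ k ∈ Finset.Icc 1 n, f k ≤ C * n)
    (hfG : ∀ s : ℂ, 1 < s.re → LSeries (fun n => f n) s = G s + A / (s - 1))
    {w : ℂ} (hw : 0 < w.re) :
    ∫ u in Ioi (0 : ℝ), ((expMean f u - A : ℝ) : ℂ) * Complex.exp (-(w * u)) =
      (G (1 + w) - A) / (1 + w) := by
  have hw1 : 1 < (1 + w).re := by simpa using hw
  have hw0 : w ≠ 0 := Complex.ne_zero_of_re_pos hw
  have hw10 : 1 + w ≠ 0 := Complex.ne_zero_of_one_lt_re hw1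
  rw [integral_sub_mul_exp_neg_eq (measurable_expMean hf).aestronglyMeasurable
    (fun u _ => abs_expMean_le hf hC u) hw, integral_expMean_mul_exp_neg hf hC hw, hfG _ hw1,
    add_sub_cancel_left]
  field_simp
  ring

theorem tendsto_expMean (hf : 0 ≤ f) (hC : ∀ n : ℕ, ∑ k ∈ Finset.Icc 1 n, f k ≤ C * n)
    (hG : ContinuousOn G {s | 1 ≤ s.re})
    (hfG : ∀ s : ℂ, 1 < s.re → LSeries (fun n => f n) s = G s + A / (s - 1)) :
    Tendsto (expMean f) atTop (𝓝 A) := by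
  have hbound (u : ℝ) : ‖((expMean f u - A : ℝ) : ℂ)‖ ≤ C + |A| := by
    rw [Complex.norm_real]
    exact (abs_sub _ _).trans (add_le_add_left (abs_expMean_le hf hC u) _)
  have hre {w : ℂ} (hw : 0 ≤ w.re) : 1 ≤ (1 + w).re := by simpa using hw
  have hcont : ContinuousOn (fun w => (G (1 + w) - A) / (1 + w)) {w | 0 ≤ w.re} :=
    ((hG.comp (by fun_prop) fun w => hre).sub continuousOn_const).div (by fun_prop) fun w hw =>
      Complex.ne_zero_of_re_pos (one_pos.trans_le (hre hw))
  refine tendsto_of_tendsto_intervalIntegral_sub (expMean_nonneg hf) (monotone_expMean_mul_exp hf)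
    fun δ hδ => ?_
  have hlim := tendsto_intervalIntegral_add
    (Complex.measurable_ofReal.comp ((measurable_expMean hf).sub_const A)).aestronglyMeasurable
    (fun u _ => hbound u) (fun w => integral_expMean_sub_mul_exp_neg hf hC hfG) hcont hδ.le
  simp only [Function.comp_apply, intervalIntegral.integral_ofReal] at hlim
  rw [← Complex.ofReal_zero] at hlim
  exact tendsto_ofReal_iff.1 hlim

theorem wiener_ikehara (hf : 0 ≤ f) (hC : ∀ n : ℕ, ∑ k ∈ Finset.Icc 1 n, f k ≤ C * n)
    (hG : ContinuousOn G {s | 1 ≤ s.re})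
    (hfG : ∀ s : ℂ, 1 < s.re → LSeries (fun n => f n) s = G s + A / (s - 1)) :
    Tendsto (fun n : ℕ => (∑ k ∈ Finset.Icc 1 n, f k) / n) atTop (𝓝 A) := by
  refine ((tendsto_expMean hf hC hG hfG).comp
    (Real.tendsto_log_atTop.comp tendsto_natCast_atTop_atTop)).congr' ?_
  filter_upwards [eventually_gt_atTop 0] with n hn using expMean_log_natCast hn

end WienerIkehara

end

section

open Topology Asymptotics Finset
open ArithmeticFunction.vonMangoldt
open scoped ArithmeticFunction.vonMangoldt

/-! ### Partial summation -/

theorem isLittleO_sum_range_of_sum_le {f g G : ℕ → ℝ} (hfg : f =o[atTop] g) (hg : 0 ≤ g)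
    (hG : Tendsto G atTop atTop) (hgG : (fun n => ∑ j ∈ range n, g j) ≤ G) :
    (fun n => ∑ j ∈ range n, f j) =o[atTop] G := by
  refine isLittleO_iff.2 fun ε hε => ?_
  obtain ⟨N, hN⟩ := eventually_atTop.1 (isLittleO_iff.1 hfg (half_pos hε))
  filter_upwards [eventually_ge_atTop N,
    hG.eventually_ge_atTop (‖∑ j ∈ range N, f j‖ / (ε / 2))] with n hn hGn
  have hhead : ‖∑ j ∈ range N, f j‖ ≤ ε / 2 * G n := by
    rwa [div_le_iff₀' (half_pos hε)] at hGn
  have htail : ‖∑ j ∈ Ico N n, f j‖ ≤ ε / 2 * G n :=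
    calc ‖∑ j ∈ Ico N n, f j‖ ≤ ∑ j ∈ Ico N n, ε / 2 * g j := by
          refine norm_sum_le_of_le _ fun j hj => ?_
          simpa only [Real.norm_of_nonneg (hg j)] using hN j (mem_Ico.1 hj).1
      _ = ε / 2 * ∑ j ∈ Ico N n, g j := (mul_sum ..).symm
      _ ≤ ε / 2 * ∑ j ∈ range n, g j := by
          gcongr
          · exact fun j _ _ => hg j
          · exact fun j hj => mem_range.2 (mem_Ico.1 hj).2
      _ ≤ ε / 2 * G n := by gcongr; exact hgG n
  rw [← sum_range_add_sum_Ico _ hn]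
  calc _ ≤ ε / 2 * G n + ε / 2 * G n := norm_add_le_of_le hhead htail
    _ = ε * G n := by ring
    _ ≤ ε * ‖G n‖ := by gcongr; exact Real.le_norm_self _

theorem isLittleO_sum_mul_of_isLittleO_sum {e w B G : ℕ → ℝ}
    (he : (fun n => ∑ k ∈ range (n + 1), e k) =o[atTop] B) (hB : 0 ≤ B)
    (hG : Tendsto G atTop atTop) {C : ℝ} (hC : 0 < C)
    (hBG : ∀ n, B n * |w n| + ∑ j ∈ range n, B j * |w (j + 1) - w j| ≤ C * G n) :
    (fun n => ∑ k ∈ range (n + 1), e k * w k) =o[atTop] G := by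
  have hvar : 0 ≤ fun j => B j * |w (j + 1) - w j| := fun j => mul_nonneg (hB j) (abs_nonneg _)
  have hboundary : (fun n => w n * ∑ k ∈ range (n + 1), e k) =o[atTop] fun n => C * G n := by
    refine ((isBigO_refl w atTop).mul_isLittleO he).trans_isBigO
      (.of_bound 1 (.of_forall fun n => ?_))
    calc ‖w n * B n‖ = B n * |w n| := by
          rw [norm_mul, Real.norm_of_nonneg (hB n), Real.norm_eq_abs, mul_comm]
      _ ≤ C * G n := (le_add_of_nonneg_right (sum_nonneg fun j _ => hvar j)).trans (hBG n)
      _ ≤ 1 * ‖C * G n‖ := by rw [one_mul]; exact Real.le_norm_self _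
  have hsum : (fun n => ∑ j ∈ range n, (w (j + 1) - w j) * ∑ k ∈ range (j + 1), e k)
      =o[atTop] fun n => C * G n := by
    refine isLittleO_sum_range_of_sum_le (g := fun j => B j * |w (j + 1) - w j|) ?_ hvar
      (hG.const_mul_atTop hC) fun n => ?_
    · simpa only [mul_comm] using
        (isBigO_refl (fun j => w (j + 1) - w j) atTop).abs_right.mul_isLittleO he
    · exact (le_add_of_nonneg_left (mul_nonneg (hB n) (abs_nonneg _))).trans (hBG n)
  refine ((hboundary.sub hsum).congr_left fun n => ?_).trans_isBigO (isBigO_const_mul_self C G _)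
  simp only [mul_comm (e _), ← smul_eq_mul (w _), sum_range_by_parts w e, add_tsub_cancel_right]
  simp only [smul_eq_mul]

theorem isLittleO_sum_mul_of_monotone {e w : ℕ → ℝ}
    (he : (fun n => ∑ k ∈ range (n + 1), e k) =o[atTop] fun n => (n : ℝ)) (hw : Monotone w)
    (hw0 : 0 ≤ w) (hnw : Tendsto (fun n => n * w n) atTop atTop) :
    (fun n => ∑ k ∈ range (n + 1), e k * w k) =o[atTop] fun n => n * w n := by
  refine isLittleO_sum_mul_of_isLittleO_sum he (fun n => n.cast_nonneg) hnw two_pos fun n => ?_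
  have hvar : ∑ j ∈ range n, (j : ℝ) * |w (j + 1) - w j| ≤ n * w n :=
    calc _ ≤ ∑ j ∈ range n, (n : ℝ) * (w (j + 1) - w j) := by
          refine sum_le_sum fun j hj => ?_
          have hstep : 0 ≤ w (j + 1) - w j := sub_nonneg.2 (hw j.le_succ)
          rw [abs_of_nonneg hstep]
          gcongr
          exact (mem_range.1 hj).le
      _ = n * (w n - w 0) := by rw [← mul_sum, sum_range_sub]
      _ ≤ n * w n := by gcongr; exact sub_le_self _ (hw0 0)
  rw [abs_of_nonneg (hw0 n)]
  linarith

theorem isLittleO_sum_mul_of_antitone {e b w : ℕ → ℝ}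
    (he : (fun n => ∑ k ∈ range (n + 1), e k) =o[atTop] fun n => ∑ k ∈ range (n + 1), b k)
    (hb : 0 ≤ b) (hw : Antitone w) (hw0 : 0 ≤ w)
    (hbw : Tendsto (fun n => ∑ k ∈ range (n + 1), b k * w k) atTop atTop) :
    (fun n => ∑ k ∈ range (n + 1), e k * w k)
      =o[atTop] fun n => ∑ k ∈ range (n + 1), b k * w k := by
  refine isLittleO_sum_mul_of_isLittleO_sum he (fun n => sum_nonneg fun k _ => hb k) hbw one_pos
    fun n => le_of_eq ?_
  have hstep (j : ℕ) : |w (j + 1) - w j| = -(w (j + 1) - w j) :=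
    abs_of_nonpos (sub_nonpos.2 (hw j.le_succ))
  simp only [hstep, abs_of_nonneg (hw0 n), one_mul, mul_comm (b _), ← smul_eq_mul (w _),
    sum_range_by_parts w b, add_tsub_cancel_right]
  simp only [smul_eq_mul, mul_neg, sum_neg_distrib, sub_eq_add_neg, mul_comm]

/-! ### Primes in residue classes -/

/-- The sum of `log k` over the `k ≤ n` in `P` is `c n + o(n)`. For a set of primes this is its
prime number theorem, in the form to which summation by parts applies. -/
def HasThetaDensity (P : Set ℕ) (c : ℝ) : Prop :=
  Tendsto (fun n : ℕ => (∑ k ∈ range (n + 1), P.indicator (fun k : ℕ => Real.log k) k) / n) atTop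
    (𝓝 c)

theorem HasThetaDensity.isLittleO_sum_sub {P : Set ℕ} {c : ℝ} (hP : HasThetaDensity P c) :
    (fun n : ℕ => ∑ k ∈ range (n + 1), (P.indicator (fun k : ℕ => Real.log k) k - c))
      =o[atTop] fun n => (n : ℝ) := by
  have hc : (fun _ : ℕ => c) =o[atTop] fun n => (n : ℝ) :=
    isLittleO_const_left.2 <| .inr <|
      tendsto_norm_atTop_atTop.comp tendsto_natCast_atTop_atTop
  have hmain : (fun n : ℕ => ∑ k ∈ range (n + 1), P.indicator (fun k : ℕ => Real.log k) k - c * n)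
      =o[atTop] fun n => (n : ℝ) := by
    refine isLittleO_of_tendsto' ?_ ?_
    · filter_upwards [eventually_ne_atTop 0] with n hn hn0
      exact absurd (Nat.cast_eq_zero.1 hn0) hn
    · rw [← sub_self c]
      refine (hP.sub_const c).congr' ?_
      filter_upwards [eventually_ne_atTop 0] with n hn
      rw [sub_div, mul_div_cancel_right₀ _ (Nat.cast_ne_zero.2 hn)]
  refine (hmain.sub hc).congr_left fun n => ?_
  rw [sum_sub_distrib, sum_const, card_range, nsmul_eq_mul]
  push_cast
  ring

/-- The primes in the residue class `a`. -/
def primesInClass {d : ℕ} (a : ZMod d) : Set ℕ := {p | p.Prime ∧ (p : ZMod d) = a}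

section ResidueClass

variable {d : ℕ} {a : ZMod d}

theorem tendsto_sum_residueClass_div [NeZero d] (ha : IsUnit a) :
    Tendsto (fun n : ℕ => (∑ k ∈ Icc 1 n, residueClass a k) / n) atTop
      (𝓝 (d.totient : ℝ)⁻¹) := by
  refine wiener_ikehara (residueClass_nonneg a) (C := Real.log 4 + 4) (fun n => ?_)
    (continuousOn_LFunctionResidueClassAux a) fun s hs => ?_
  · calc ∑ k ∈ Icc 1 n, residueClass a k ≤ ∑ k ∈ Icc 1 n, Λ k :=
          sum_le_sum fun k _ => residueClass_le a k
      _ = Chebyshev.psi n := by rw [Chebyshev.psi, Nat.floor_natCast]; rfl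
      _ ≤ (Real.log 4 + 4) * n := Chebyshev.psi_le_const_mul_self n.cast_nonneg
  · rw [eqOn_LFunctionResidueClassAux ha hs]
    push_cast
    ring

theorem residueClass_sub_indicator_log_mem_Icc (a : ZMod d) (k : ℕ) :
    residueClass a k - (primesInClass a).indicator (fun k : ℕ => Real.log k) k ∈
      Set.Icc 0 (if ¬ k.Prime then Λ k else 0) := by
  by_cases hk : k.Prime
  · by_cases hka : (k : ZMod d) = a <;>
      simp [primesInClass, residueClass, hk, hka, ArithmeticFunction.vonMangoldt_apply_prime hk]
  · simpa [primesInClass, hk] using ⟨residueClass_nonneg a k, residueClass_le a k⟩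

theorem isLittleO_sum_residueClass_sub_indicator_log (a : ZMod d) :
    (fun n : ℕ => ∑ k ∈ Icc 1 n,
        (residueClass a k - (primesInClass a).indicator (fun k : ℕ => Real.log k) k))
      =o[atTop] fun n => (n : ℝ) := by
  have hsqrt : Real.sqrt =o[atTop] fun x => x := by
    refine isLittleO_of_tendsto (fun x hx => hx ▸ Real.sqrt_zero) ?_
    simp only [Real.sqrt_div_self]
    exact tendsto_inv_atTop_zero.comp Real.tendsto_sqrt_atTop
  have hpsi : (fun n : ℕ => Chebyshev.psi n - Chebyshev.theta n) =o[atTop] fun n => (n : ℝ) :=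
    (Chebyshev.isBigO_psi_sub_theta_sqrt.trans_isLittleO hsqrt).comp_tendsto
      tendsto_natCast_atTop_atTop
  refine (isBigO_of_le _ fun n => ?_).trans_isLittleO hpsi
  have hmem (k : ℕ) := residueClass_sub_indicator_log_mem_Icc a k
  rw [Chebyshev.psi_sub_theta_eq_sum_not_prime, Nat.floor_natCast, sum_filter]
  exact abs_le_abs_of_nonneg (sum_nonneg fun k _ => (hmem k).1) (sum_le_sum fun k _ => (hmem k).2)

theorem hasThetaDensity_primesInClass [NeZero d] (ha : IsUnit a) :
    HasThetaDensity (primesInClass a) (d.totient : ℝ)⁻¹ := by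
  rw [← sub_zero (d.totient : ℝ)⁻¹]
  refine ((tendsto_sum_residueClass_div ha).sub
    (isLittleO_sum_residueClass_sub_indicator_log a).tendsto_div_nhds_zero).congr fun n => ?_
  rw [← sub_div, ← sum_sub_distrib, Nat.range_succ_eq_Icc_zero, ← add_sum_Ioc_eq_sum_Icc n.zero_le]
  simp only [sub_sub_cancel, primesInClass, Set.indicator_apply, Nat.cast_zero, Real.log_zero,
    ite_self, zero_add]
  rfl

end ResidueClass

theorem primesInClass_of_subsingleton (a : ZMod 1) : primesInClass a = {p | p.Prime} :=
  Set.ext fun _ => and_iff_left (Subsingleton.elim _ _)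

theorem hasThetaDensity_primes : HasThetaDensity {p | p.Prime} 1 := by
  simpa [primesInClass_of_subsingleton] using hasThetaDensity_primesInClass (d := 1) isUnit_one

section Weights

variable {w : ℕ → ℝ}

theorem tendsto_nat_mul_atTop (hw : Monotone w) (hwpos : ∃ k, 0 < w k) :
    Tendsto (fun n : ℕ => n * w n) atTop atTop := by
  obtain ⟨N, hN⟩ := hwpos
  refine tendsto_atTop_mono' _ ?_ (tendsto_natCast_atTop_atTop.atTop_mul_const hN)
  filter_upwards [eventually_ge_atTop N] with n hn
  exact mul_le_mul_of_nonneg_left (hw hn) n.cast_nonneg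

theorem tendsto_sum_indicator_atTop {P : Set ℕ} (hP : P.Infinite) (hw : Monotone w) (hw0 : 0 ≤ w)
    (hwpos : ∃ k, 0 < w k) :
    Tendsto (fun n => ∑ k ∈ range (n + 1), P.indicator w k) atTop atTop := by
  obtain ⟨N, hN⟩ := hwpos
  have hns : ¬ Summable (P.indicator w) := fun hs => by
    have hsmall := hs.tendsto_atTop_zero.eventually_lt_const hN
    obtain ⟨p, hpP, hp, hpN⟩ := ((Nat.frequently_atTop_iff_infinite.2 hP).and_eventually
      (hsmall.and (eventually_ge_atTop N))).exists
    rw [Set.indicator_of_mem hpP] at hp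
    exact (hw hpN).not_gt hp
  exact ((not_summable_iff_tendsto_nat_atTop_of_nonneg fun k =>
    Set.indicator_nonneg (fun k _ => hw0 k) k).1 hns).comp (tendsto_add_atTop_nat 1)

theorem HasThetaDensity.isLittleO_sum_mul {P : Set ℕ} {c : ℝ} (hP : HasThetaDensity P c)
    (hw : Monotone w) (hw0 : 0 ≤ w) (hwpos : ∃ k, 0 < w k)
    (hwsum : (fun n : ℕ => n * w n) =O[atTop] fun n => ∑ k ∈ range (n + 1), w k) :
    (fun n => ∑ k ∈ range (n + 1), (P.indicator (fun k : ℕ => Real.log k) k - c) * w k)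
      =o[atTop] fun n => ∑ k ∈ range (n + 1), w k :=
  (isLittleO_sum_mul_of_monotone hP.isLittleO_sum_sub hw hw0
    (tendsto_nat_mul_atTop hw hwpos)).trans_isBigO hwsum

theorem HasThetaDensity.isLittleO_sum_indicator_sub_mul_log {P Q : Set ℕ} {c : ℝ}
    (hP : HasThetaDensity P c) (hQ : HasThetaDensity Q 1)
    (hw : Monotone w) (hw0 : 0 ≤ w) (hwpos : ∃ k, 0 < w k)
    (hwsum : (fun n : ℕ => n * w n) =O[atTop] fun n => ∑ k ∈ range (n + 1), w k) :
    (fun n => ∑ k ∈ range (n + 1), (P.indicator w k - c * Q.indicator w k) * Real.log k)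
      =o[atTop] fun n => ∑ k ∈ range (n + 1), Q.indicator w k * Real.log k := by
  have hPw := hP.isLittleO_sum_mul hw hw0 hwpos hwsum
  have hQw := hQ.isLittleO_sum_mul hw hw0 hwpos hwsum
  have hmul (R : Set ℕ) (k : ℕ) :
      R.indicator w k * Real.log k = R.indicator (fun k : ℕ => Real.log k) k * w k := by
    by_cases hk : k ∈ R <;> simp [hk, mul_comm]
  have hequiv : (fun n => ∑ k ∈ range (n + 1), Q.indicator w k * Real.log k) ~[atTop]
      fun n => ∑ k ∈ range (n + 1), w k :=
    hQw.congr_left fun n => by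
      simp only [Pi.sub_apply, ← sum_sub_distrib, hmul, sub_mul, one_mul]
  refine ((hPw.sub (hQw.const_mul_left c)).trans_isBigO hequiv.symm.isBigO).congr_left fun n => ?_
  simp only [mul_sum, ← sum_sub_distrib, sub_mul, mul_assoc, hmul]
  exact sum_congr rfl fun k _ => by ring

theorem isLittleO_sum_of_isLittleO_sum_mul_log {e b : ℕ → ℝ}
    (h : (fun n => ∑ k ∈ range (n + 1), e k * Real.log k)
      =o[atTop] fun n => ∑ k ∈ range (n + 1), b k * Real.log k)
    (he : ∀ k < 2, e k = 0) (hb : ∀ k < 2, b k = 0) (hb0 : 0 ≤ b)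
    (hbsum : Tendsto (fun n => ∑ k ∈ range (n + 1), b k) atTop atTop) :
    (fun n => ∑ k ∈ range (n + 1), e k) =o[atTop] fun n => ∑ k ∈ range (n + 1), b k := by
  have hlogpos (k : ℕ) : 0 < Real.log (max k 2 : ℕ) :=
    Real.log_pos (Nat.one_lt_cast.2 (le_max_right k 2))
  have hcancel {g : ℕ → ℝ} (hg : ∀ k < 2, g k = 0) (k : ℕ) :
      g k * Real.log k * (Real.log (max k 2 : ℕ))⁻¹ = g k := by
    rcases lt_or_ge k 2 with hk | hk
    · rw [hg k hk, zero_mul, zero_mul]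
    · simpa only [max_eq_left hk] using mul_inv_cancel_right₀ (hlogpos k).ne' (g k)
  have hanti : Antitone fun k : ℕ => (Real.log (max k 2 : ℕ))⁻¹ := fun j k hjk => by
    have := hlogpos j
    have : 0 < ((max j 2 : ℕ) : ℝ) := by positivity
    dsimp only
    gcongr
  have hsum := isLittleO_sum_mul_of_antitone h
    (fun k => mul_nonneg (hb0 k) (Real.log_natCast_nonneg k)) hanti
    (fun k => (inv_pos.2 (hlogpos k)).le) (by simpa only [hcancel hb] using hbsum)
  simpa only [hcancel he, hcancel hb] using hsum

theorem HasThetaDensity.tendsto_sum_indicator_div_sum_primes {P : Set ℕ} {c : ℝ}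
    (hP : HasThetaDensity P c) (hPprime : P ⊆ {p | p.Prime})
    (hw : Monotone w) (hw0 : 0 ≤ w) (hwpos : ∃ k, 0 < w k)
    (hwsum : (fun n : ℕ => n * w n) =O[atTop] fun n => ∑ k ∈ range (n + 1), w k) :
    Tendsto (fun n => (∑ k ∈ range (n + 1), P.indicator w k) /
      ∑ k ∈ range (n + 1), {p | p.Prime}.indicator w k) atTop (𝓝 c) := by
  have hzero {R : Set ℕ} (hR : R ⊆ {p | p.Prime}) (k : ℕ) (hk : k < 2) : R.indicator w k = 0 :=
    Set.indicator_of_notMem (fun hkR => hk.not_ge (hR hkR).two_le) w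
  have hsum := tendsto_sum_indicator_atTop Nat.infinite_setOfPred_prime hw hw0 hwpos
  have hlittle := isLittleO_sum_of_isLittleO_sum_mul_log
    (hP.isLittleO_sum_indicator_sub_mul_log hasThetaDensity_primes hw hw0 hwpos hwsum)
    (fun k hk => by rw [hzero hPprime k hk, hzero subset_rfl k hk, mul_zero, sub_zero])
    (hzero subset_rfl) (Set.indicator_nonneg fun k _ => hw0 k) hsum
  rw [← zero_add c]
  refine (hlittle.tendsto_div_nhds_zero.add_const c).congr' ?_
  filter_upwards [hsum.eventually_ne_atTop 0] with n hn
  rw [sum_sub_distrib, ← mul_sum, sub_div, mul_div_cancel_right₀ _ hn, sub_add_cancel]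

end Weights

theorem rpow_add_one_sub_rpow_add_one_le {x y s : ℝ} (hx : 0 ≤ x) (hy : 0 < y) (hs : 0 ≤ s) :
    y ^ (s + 1) - x ^ (s + 1) ≤ (s + 1) * (y - x) * y ^ s := by
  have hbernoulli := one_add_mul_self_le_rpow_one_add (s := x / y - 1)
    (by linarith [div_nonneg hx hy.le]) (p := s + 1) (by linarith)
  rw [add_sub_cancel, Real.div_rpow hx hy.le, le_div_iff₀ (by positivity),
    Real.rpow_add_one hy.ne'] at hbernoulli
  rw [Real.rpow_add_one hy.ne']
  have : x / y * y = x := div_mul_cancel₀ x hy.ne'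
  linear_combination hbernoulli - (s + 1) * y ^ s * this

theorem isBigO_nat_mul_rpow_sum_rpow {s : ℝ} (hs : 0 ≤ s) :
    (fun n : ℕ => n * (n : ℝ) ^ s) =O[atTop] fun n => ∑ k ∈ range (n + 1), (k : ℝ) ^ s := by
  refine .of_bound (s + 1) (.of_forall fun n => ?_)
  rw [Real.norm_of_nonneg (by positivity), Real.norm_of_nonneg (by positivity)]
  calc n * (n : ℝ) ^ s = (n : ℝ) ^ (s + 1) - ((0 : ℕ) : ℝ) ^ (s + 1) := by
        rw [Real.rpow_add_one' n.cast_nonneg (by positivity), Nat.cast_zero,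
          Real.zero_rpow (by positivity), sub_zero, mul_comm]
    _ = ∑ k ∈ range n, (((k + 1 : ℕ) : ℝ) ^ (s + 1) - (k : ℝ) ^ (s + 1)) :=
        (sum_range_sub (fun k : ℕ => (k : ℝ) ^ (s + 1)) n).symm
    _ ≤ ∑ k ∈ range n, (s + 1) * ((k + 1 : ℕ) : ℝ) ^ s := by
        refine sum_le_sum fun k _ => ?_
        simpa using rpow_add_one_sub_rpow_add_one_le k.cast_nonneg
          (Nat.cast_pos.2 k.succ_pos) hs
    _ ≤ (s + 1) * ∑ k ∈ range (n + 1), (k : ℝ) ^ s := by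
        rw [← mul_sum, sum_range_succ' (fun k : ℕ => (k : ℝ) ^ s)]
        gcongr
        exact le_add_of_nonneg_right (by positivity)

theorem sum_filter_eq_sum_indicator (P : ℕ → Prop) [DecidablePred P] (w : ℕ → ℝ) (n : ℕ) :
    ∑ k ∈ range n with P k, w k = ∑ k ∈ range n, {k | P k}.indicator w k := by
  simp [sum_filter, Set.indicator_apply]

theorem prime_power_sum_in_progression_general {d : ℕ} [NeZero d] {a : ZMod d} (ha : IsUnit a)
    {s : ℝ} (hs : 0 ≤ s) :
    Tendsto (fun x : ℝ =>
        (∑ p ∈ range (⌊x⌋₊ + 1) with Nat.Prime p ∧ (p : ZMod d) = a, (p : ℝ) ^ s) /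
          ∑ p ∈ range (⌊x⌋₊ + 1) with Nat.Prime p, (p : ℝ) ^ s)
      atTop (𝓝 (1 / (d.totient : ℝ))) := by
  have hnat := (hasThetaDensity_primesInClass ha).tendsto_sum_indicator_div_sum_primes
    (fun _ hp => hp.1) (w := fun k : ℕ => (k : ℝ) ^ s)
    (fun j k hjk => Real.rpow_le_rpow j.cast_nonneg (Nat.cast_le.2 hjk) hs)
    (fun k => Real.rpow_nonneg k.cast_nonneg s) ⟨1, by simp⟩ (isBigO_nat_mul_rpow_sum_rpow hs)
  simp only [one_div, sum_filter_eq_sum_indicator]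
  exact hnat.comp tendsto_nat_floor_atTop

theorem prime_and_dvd_sub_one_iff {d p : ℕ} :
    p.Prime ∧ d ∣ p - 1 ↔ p.Prime ∧ (p : ZMod d) = 1 :=
  and_congr_right fun hp => by
    rw [← Nat.modEq_iff_dvd' hp.one_le, ← ZMod.natCast_eq_natCast_iff, Nat.cast_one, eq_comm]

end

/-- For fixed `d ≥ 1` and `m ≥ 0`, the ratio
`(∑_{p ≤ x, p ≡ 1 (mod d)} p^m) / (∑_{p ≤ x} p^m)` tends to `1/φ(d)` as `x → ∞`. -/
theorem prime_power_sum_in_progression (d : ℕ) (hd : 0 < d) (m : ℕ) :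
    Tendsto (fun x : ℝ =>
        (∑ p ∈ (Finset.range (⌊x⌋₊ + 1)).filter (fun p => Nat.Prime p ∧ d ∣ (p - 1)),
            (p : ℝ) ^ m) /
          (∑ p ∈ (Finset.range (⌊x⌋₊ + 1)).filter Nat.Prime, (p : ℝ) ^ m))
      atTop (nhds (1 / (d.totient : ℝ))) := by
  have : NeZero d := ⟨hd.ne'⟩
  simpa only [Real.rpow_natCast, prime_and_dvd_sub_one_iff] using
    prime_power_sum_in_progression_general (d := d) isUnit_one m.cast_nonneg
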